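/- arXiv:math/0407032 — 2 statements merged into one kernel-verified Lean document; each statement's English description precedes it below -/
import Mathlib

section
/- Let f : ℝ → ℝ be continuous and 1-periodic (f (x + 1) = f x for all x). Then the following are equivalent: (i) for every c ∈ ℝ, the set {x ∈ Set.Ico (0:ℝ) 1 | f x = c} has at most two elements; (ii) there is exactly one point in Set.Ico (0:ℝ) 1 that is a local minimum point of f and exactly one point in Set.Ico (0:ℝ) 1 that is a local maximum point of f. -/
/-!
Work with points of `ℝ` modulo `1`. Condition (i) says that there are no `x < y < z < x + 1` at
which `f` takes the same value (`no_three_of_encard_le_two`).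

(ii) ⇒ (i): three such points would give, by Rolle, a local extremum in each of the disjoint
intervals `(x, y)`, `(y, z)`, `(z, x + 1)`. Two of these are of the same type, and they are distinct
modulo `1`, against uniqueness.

(i) ⇒ (ii): a global minimum point `m` exists by compactness. Suppose `q ∈ (m, m + 1)` is another
local minimum point. If `f m < f q`, the intermediate value theorem produces the value `f q`
once on each side of `q`. If `f m = f q`, then `f` exceeds `f m` on `(m, q)` and on `(q, m + 1)`, so
a level slightly above `f m` is taken twice in the first interval and once in the second. Both
contradict (i) (`no_second_min`). Maxima are treated by passing to `-f`.
-/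

section Periodic

variable {f : ℝ → ℝ}

lemma apply_fract (hper : ∀ x, f (x + 1) = f x) (x : ℝ) : f (Int.fract x) = f x := by
  have hp : Function.Periodic f 1 := hper
  simpa only [Int.fract, mul_one] using hp.sub_int_mul_eq (x := x) ⌊x⌋

lemma isLocalMin_fract (hper : ∀ x, f (x + 1) = f x) {x : ℝ} (h : IsLocalMin f x) :
    IsLocalMin f (Int.fract x) := by
  have hp : Function.Periodic f 1 := hper
  have hshift : ∀ y, f (y + ⌊x⌋) = f y := fun y => by
    simpa only [mul_one] using hp.int_mul ⌊x⌋ y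
  have ht : Filter.Tendsto (fun y : ℝ => y + ⌊x⌋) (nhds (Int.fract x)) (nhds x) := by
    have hc : Continuous (fun y : ℝ => y + ⌊x⌋) := by fun_prop
    have := hc.tendsto (Int.fract x)
    simpa [Int.fract_add_floor] using this
  filter_upwards [ht.eventually h] with y hy
  rw [apply_fract hper]
  simpa [hshift] using hy

lemma isLocalMin_neg_iff_isLocalMax {x : ℝ} : IsLocalMin (-f) x ↔ IsLocalMax f x :=
  ⟨fun h => by simpa using h.neg, fun h => h.neg⟩

lemma fract_ne {x y : ℝ} (hxy : x < y) (hy : y < x + 1) : Int.fract x ≠ Int.fract y := by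
  intro h
  obtain ⟨n, hn⟩ := Int.fract_eq_fract.1 h
  have h1 : (n : ℝ) < 0 := by linarith
  have h2 : (-1 : ℝ) < n := by linarith
  have h3 : n < 0 := by exact_mod_cast h1
  have h4 : -1 < n := by exact_mod_cast h2
  omega

lemma fract_mem (x : ℝ) : Int.fract x ∈ Set.Ico (0 : ℝ) 1 :=
  ⟨Int.fract_nonneg x, Int.fract_lt_one x⟩

lemma no_three_of_encard_le_two (hper : ∀ x, f (x + 1) = f x)
    (h : ∀ c : ℝ, ({x ∈ Set.Ico (0:ℝ) 1 | f x = c}).encard ≤ 2) {x y z : ℝ}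
    (hxy : x < y) (hyz : y < z) (hzx : z < x + 1) (h1 : f x = f y) (h2 : f y = f z) : False := by
  have hsub : ({Int.fract x, Int.fract y, Int.fract z} : Set ℝ) ⊆
      {t ∈ Set.Ico (0:ℝ) 1 | f t = f y} := by
    rintro t (rfl | rfl | rfl) <;> refine ⟨fract_mem _, ?_⟩ <;> rw [apply_fract hper]
    · exact h1
    · exact h2.symm
  have h3 : ({Int.fract x, Int.fract y, Int.fract z} : Set ℝ).encard = 3 :=
    Set.encard_eq_three.2 ⟨_, _, _, fract_ne hxy (by linarith), fract_ne (by linarith) hzx,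
      fract_ne hyz (by linarith), rfl⟩
  have := (Set.encard_le_encard hsub).trans (h (f y))
  rw [h3] at this
  exact absurd this (by decide)

/-- A periodic function taking every value at most twice per period has no local minimum point
strictly between two consecutive translates of a global minimum point. -/
lemma no_second_min (hf : Continuous f) (hper : ∀ x, f (x + 1) = f x)
    (H : ∀ c : ℝ, ({x ∈ Set.Ico (0:ℝ) 1 | f x = c}).encard ≤ 2)
    {m q : ℝ} (hm : ∀ x, f m ≤ f x) (hmq : m < q) (hqm : q < m + 1) (hq : IsLocalMin f q) :
    False := by
  rcases (hm q).eq_or_lt with heq | hlt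
  · obtain ⟨a, hma, haq⟩ := exists_between hmq
    obtain ⟨b, hqb, hbm⟩ := exists_between hqm
    have ha : f m < f a := (hm a).lt_of_ne fun e =>
      no_three_of_encard_le_two hper H hma haq hqm e (e ▸ heq)
    have hb : f m < f b := (hm b).lt_of_ne fun e =>
      no_three_of_encard_le_two hper H hmq hqb hbm heq (heq ▸ e)
    obtain ⟨c, hmc, hc⟩ := exists_between (lt_min ha hb)
    have hca := hc.trans_le (min_le_left _ _)
    have hcb := hc.trans_le (min_le_right _ _)
    obtain ⟨x, hx, hxc⟩ := intermediate_value_Ioo hma.le hf.continuousOn ⟨hmc, hca⟩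
    obtain ⟨y, hy, hyc⟩ := intermediate_value_Ioo' haq.le hf.continuousOn ⟨heq ▸ hmc, hca⟩
    obtain ⟨z, hz, hzc⟩ := intermediate_value_Ioo hqb.le hf.continuousOn ⟨heq ▸ hmc, hcb⟩
    exact no_three_of_encard_le_two hper H (hx.2.trans hy.1) (hy.2.trans hz.1)
      (by linarith [hz.2, hx.1]) (hxc.trans hyc.symm) (hyc.trans hzc.symm)
  · obtain ⟨l, u, hlu, hsub⟩ := mem_nhds_iff_exists_Ioo_subset.1 hq
    obtain ⟨a, hla, haq⟩ := exists_between (max_lt hmq hlu.1)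
    obtain ⟨b, hqb, hbu⟩ := exists_between (lt_min hqm hlu.2)
    have hma := (le_max_left _ _).trans_lt hla
    have hbm := hbu.trans_le (min_le_left _ _)
    have ha : f q ≤ f a := hsub ⟨(le_max_right _ _).trans_lt hla, haq.trans hlu.2⟩
    have hb : f q ≤ f b := hsub ⟨hlu.1.trans hqb, hbu.trans_le (min_le_right _ _)⟩
    obtain ⟨x, hx, hxq⟩ := intermediate_value_Ioc hma.le hf.continuousOn ⟨hlt, ha⟩
    obtain ⟨z, hz, hzq⟩ := intermediate_value_Ico' hbm.le hf.continuousOn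
      ⟨(hper m).symm ▸ hlt, hb⟩
    exact no_three_of_encard_le_two hper H (hx.2.trans_lt haq) (hqb.trans_le hz.1)
      (by linarith [hz.2, hx.1]) hxq hzq.symm

lemma existsUnique_min (hf : Continuous f) (hper : ∀ x, f (x + 1) = f x)
    (H : ∀ c : ℝ, ({x ∈ Set.Ico (0:ℝ) 1 | f x = c}).encard ≤ 2) :
    ∃! x, x ∈ Set.Ico (0:ℝ) 1 ∧ IsLocalMin f x := by
  obtain ⟨m₀, -, hm₀⟩ := isCompact_Icc.exists_isMinOn
    (Set.nonempty_Icc.2 (zero_le_one (α := ℝ))) hf.continuousOn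
  have hm : ∀ x, f (Int.fract m₀) ≤ f x := fun x => by
    rw [apply_fract hper, ← apply_fract hper x]
    exact hm₀ (Set.Ico_subset_Icc_self (fract_mem x))
  have hmem := fract_mem m₀
  generalize Int.fract m₀ = m at hm hmem
  refine ⟨m, ⟨hmem, Filter.Eventually.of_forall hm⟩, ?_⟩
  rintro q ⟨hq, hmin⟩
  obtain ⟨h1, h2⟩ := hq
  obtain ⟨h3, h4⟩ := hmem
  rcases lt_trichotomy q m with h | h | h
  · -- Here the translate `m - 1` lies just below `q`.
    have e : f (m - 1) = f m := by rw [← hper (m - 1), sub_add_cancel]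
    exact (no_second_min hf hper H (m := m - 1) (fun x => e ▸ hm x) (by linarith) (by linarith)
      hmin).elim
  · exact h
  · exact (no_second_min hf hper H hm h (by linarith) hmin).elim

/-- Two local minimum points less than a period apart contradict uniqueness modulo `1`. -/
lemma no_two_min (hper : ∀ x, f (x + 1) = f x)
    (h : ∃! x, x ∈ Set.Ico (0:ℝ) 1 ∧ IsLocalMin f x) {a b : ℝ}
    (hab : a < b) (hb : b < a + 1) (ha : IsLocalMin f a) (hb' : IsLocalMin f b) : False :=
  fract_ne hab hb (h.unique ⟨fract_mem a, isLocalMin_fract hper ha⟩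
    ⟨fract_mem b, isLocalMin_fract hper hb'⟩)

lemma no_three_of_unique (hf : Continuous f) (hper : ∀ x, f (x + 1) = f x)
    (h1 : ∃! x, x ∈ Set.Ico (0:ℝ) 1 ∧ IsLocalMin f x)
    (h2 : ∃! x, x ∈ Set.Ico (0:ℝ) 1 ∧ IsLocalMax f x) {x y z : ℝ}
    (hxy : x < y) (hyz : y < z) (hzx : z < x + 1) (e1 : f x = f y) (e2 : f y = f z) : False := by
  have hper' : ∀ x, (-f) (x + 1) = (-f) x := fun x => by simp [hper]
  have h2' : ∃! x, x ∈ Set.Ico (0:ℝ) 1 ∧ IsLocalMin (-f) x := by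
    simpa only [isLocalMin_neg_iff_isLocalMax] using h2
  obtain ⟨a, ha, hla⟩ := exists_isLocalExtr_Ioo hxy hf.continuousOn e1
  obtain ⟨b, hb, hlb⟩ := exists_isLocalExtr_Ioo hyz hf.continuousOn e2
  obtain ⟨c, hc, hlc⟩ := exists_isLocalExtr_Ioo hzx hf.continuousOn
    (by rw [hper, e1, e2] : f z = f (x + 1))
  have hab := ha.2.trans hb.1
  have hbc := hb.2.trans hc.1
  have hca : c < a + 1 := by linarith [hc.2, ha.1]
  have A := @no_two_min f hper h1
  have B := fun {a b : ℝ} (hab : a < b) (hb : b < a + 1) (ha : IsLocalMax f a)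
    (hb' : IsLocalMax f b) => @no_two_min (-f) hper' h2' a b hab hb ha.neg hb'.neg
  rcases hla with hla | hla <;> rcases hlb with hlb | hlb <;> rcases hlc with hlc | hlc <;>
    first
    | exact A hab (by linarith) hla hlb
    | exact A hbc (by linarith) hlb hlc
    | exact A (hab.trans hbc) hca hla hlc
    | exact B hab (by linarith) hla hlb
    | exact B hbc (by linarith) hlb hlc
    | exact B (hab.trans hbc) hca hla hlc

end Periodic

theorem level_sets_atMostTwo_iff_unique_extrema
    (f : ℝ → ℝ) (hf : Continuous f) (hper : ∀ x, f (x + 1) = f x) :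
    (∀ c : ℝ, ({x ∈ Set.Ico (0:ℝ) 1 | f x = c}).encard ≤ 2) ↔
      ((∃! x, x ∈ Set.Ico (0:ℝ) 1 ∧ IsLocalMin f x) ∧
       (∃! x, x ∈ Set.Ico (0:ℝ) 1 ∧ IsLocalMax f x)) := by
  constructor
  · intro H
    refine ⟨existsUnique_min hf hper H, ?_⟩
    have H' : ∀ c : ℝ, ({x ∈ Set.Ico (0:ℝ) 1 | (-f) x = c}).encard ≤ 2 := fun c => by
      simpa [neg_eq_iff_eq_neg] using H (-c)
    have := existsUnique_min (f := -f) hf.neg (fun x => by simp [hper]) H'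
    simpa only [isLocalMin_neg_iff_isLocalMax] using this
  · rintro ⟨h1, h2⟩ c
    by_contra hc
    have hc3 : 3 ≤ ({x ∈ Set.Ico (0:ℝ) 1 | f x = c}).encard :=
      Order.add_one_le_of_lt (not_le.1 hc)
    obtain ⟨t, ht, ht3⟩ := Set.exists_subset_encard_eq hc3
    obtain ⟨x, y, z, hxy, hxz, hyz, rfl⟩ := Set.encard_eq_three.1 ht3
    obtain ⟨⟨x0, x1⟩, ex⟩ := @ht x (by simp)
    obtain ⟨⟨y0, y1⟩, ey⟩ := @ht y (by simp)
    obtain ⟨⟨z0, z1⟩, ez⟩ := @ht z (by simp)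
    have K := @no_three_of_unique f hf hper h1 h2
    rcases lt_or_gt_of_ne hxy with a | a <;> rcases lt_or_gt_of_ne hxz with b | b <;>
      rcases lt_or_gt_of_ne hyz with d | d
    · exact K a d (by linarith) (by simp [*]) (by simp [*])
    · exact K b d (by linarith) (by simp [*]) (by simp [*])
    · linarith
    · exact K b a (by linarith) (by simp [*]) (by simp [*])
    · exact K a b (by linarith) (by simp [*]) (by simp [*])
    · linarith
    · exact K d b (by linarith) (by simp [*]) (by simp [*])
    · exact K d a (by linarith) (by simp [*]) (by simp [*])
end

section
/- Let S denote the set of functions f : ℝ → ℝ that are smooth (ContDiff ℝ ⊤ f), 1-periodic (f (x + 1) = f x for all x), and have exactly one point in Set.Ico (0:ℝ) 1 that is a local minimum point of f and exactly one point in Set.Ico (0:ℝ) 1 that is a local maximum point of f. Then S is path-connected in the following sense: for any f, g ∈ S there exists a jointly continuous map H : ℝ × Set.Icc (0:ℝ) 1 → ℝ such that H (·, 0) = f, H (·, 1) = g, and for every t ∈ Set.Icc (0:ℝ) 1 the function H (·, t) belongs to S. -/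
/-!
A function in `SmoothOneMinOneMax` is the same thing as a smooth 1-periodic function that is
strictly increasing on some `[a, b]` and strictly decreasing on `[b, a + 1]`, with
`a < b < a + 1` (`exists_unimodal`, `Unimodal.mem`): between two consecutive extrema a continuous
function without further local extrema is injective, by Rolle.

For fixed `a` and `b`, this monotonicity condition is convex, so two functions with the same
extremal points are joined by a segment (`joinedIn_of_unimodal`). The extremal points can be
moved to `-1/4` and `1/4` by precomposing with a suitable lift `φ` of a circle homeomorphism,
given explicitly by a Möbius transformation of the unit disc (`exists_lift`). Lifts of
increasing circle maps also form a convex set containing the identity, so `f` is joined to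
`f ∘ φ` by the path `f ∘ ((1 - t) id + t φ)` (`joinedIn_comp`). Altogether `f` and `g` are joined
by the chain `f ∼ f ∘ φ ∼ g ∘ ψ ∼ g`.

Joint continuity is handled by working with paths in `C(ℝ, ℝ)` with the compact-open topology,
where it amounts to continuity of the path.
-/

/-- The set of smooth 1-periodic functions `ℝ → ℝ` having exactly one local minimum
point and exactly one local maximum point in the period window `[0,1)`. -/
def SmoothOneMinOneMax : Set (ℝ → ℝ) :=
  {f | ContDiff ℝ (⊤ : ℕ∞) f ∧ (∀ x, f (x + 1) = f x) ∧
    (∃! x, x ∈ Set.Ico (0:ℝ) 1 ∧ IsLocalMin f x) ∧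
    (∃! x, x ∈ Set.Ico (0:ℝ) 1 ∧ IsLocalMax f x)}

open Set Filter Topology

/-- `f` is strictly increasing on `[a, b]` and strictly decreasing on `[b, a + 1]`, where
`a < b < a + 1`. For 1-periodic `f` this describes the behaviour over a whole period. -/
structure Unimodal (f : ℝ → ℝ) (a b : ℝ) : Prop where
  lt : a < b
  lt' : b < a + 1
  mono : StrictMonoOn f (Icc a b)
  anti : StrictAntiOn f (Icc b (a + 1))

/-! ### Functions with one minimum and one maximum are unimodal, and conversely -/

theorem isLocalMin_add_int {f : ℝ → ℝ} (hp : ∀ x, f (x + 1) = f x) {x : ℝ} (n : ℤ)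
    (h : IsLocalMin f x) : IsLocalMin f (x + n) := by
  have hper : Function.Periodic f 1 := hp
  have h' : IsLocalMin f ((fun z : ℝ => z - n) (x + n)) := by simpa using h
  have := h'.comp_continuous (g := fun z : ℝ => z - n) (b := x + n) (by fun_prop)
  convert this using 1
  funext z
  simpa using (hper.sub_int_mul_eq (x := z) n).symm

theorem mem_neg {f : ℝ → ℝ} (hf : f ∈ SmoothOneMinOneMax) :
    (fun x => -f x) ∈ SmoothOneMinOneMax := by
  obtain ⟨h1, h2, h3, h4⟩ := hf
  refine ⟨h1.neg, fun x => by simp [h2], ?_, ?_⟩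
  · obtain ⟨x, ⟨hx, hx'⟩, hu⟩ := h4
    exact ⟨x, ⟨hx, hx'.neg⟩, fun y hy => hu y ⟨hy.1, by simpa using hy.2.neg⟩⟩
  · obtain ⟨x, ⟨hx, hx'⟩, hu⟩ := h3
    exact ⟨x, ⟨hx, hx'.neg⟩, fun y hy => hu y ⟨hy.1, by simpa using hy.2.neg⟩⟩

/-- The local minimum points of `f` form a single coset of `ℤ`, consisting of global minimum
points. -/
theorem exists_min {f : ℝ → ℝ} (hf : f ∈ SmoothOneMinOneMax) :
    ∃ a ∈ Ico (0 : ℝ) 1, (∀ x, f a ≤ f x) ∧ ∀ y, IsLocalMin f y → ∃ n : ℤ, y = a + n := by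
  obtain ⟨h1, h2, ⟨a, ⟨ha, ha'⟩, hu⟩, -⟩ := hf
  have hper : Function.Periodic f 1 := h2
  have key : ∀ y, IsLocalMin f y → y = a + ⌊y⌋ := by
    intro y hy
    have : Int.fract y = a := by
      refine hu _ ⟨⟨Int.fract_nonneg y, Int.fract_lt_one y⟩, ?_⟩
      have := isLocalMin_add_int h2 (-⌊y⌋) hy
      simpa [Int.fract, sub_eq_add_neg] using this
    rw [← this, Int.fract_add_floor]
  refine ⟨a, ha, ?_, fun y hy => ⟨_, key y hy⟩⟩
  obtain ⟨c, hc, hmin⟩ := isCompact_Icc.exists_isMinOn (nonempty_Icc.2 (zero_le_one (α := ℝ)))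
    h1.continuous.continuousOn
  have hglob : ∀ x, f c ≤ f x := by
    intro x
    obtain ⟨y, hy, hxy⟩ := hper.exists_mem_Ico₀ one_pos x
    rw [hxy]
    exact hmin (Ico_subset_Icc_self hy)
  have hca := key c (Eventually.of_forall hglob)
  intro x
  have : f c = f a := by
    rw [hca]
    simpa using hper.int_mul ⌊c⌋ a
  rw [← this]
  exact hglob x

theorem exists_max {f : ℝ → ℝ} (hf : f ∈ SmoothOneMinOneMax) :
    ∃ b ∈ Ico (0 : ℝ) 1, (∀ x, f x ≤ f b) ∧ ∀ y, IsLocalMax f y → ∃ n : ℤ, y = b + n := by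
  obtain ⟨b, hb, hb1, hb2⟩ := exists_min (mem_neg hf)
  exact ⟨b, hb, fun x => neg_le_neg_iff.1 (hb1 x), fun y hy => hb2 y hy.neg⟩

/-- By Rolle, `f` is injective on an interval without interior local extrema. -/
theorem injOn_of_no_extr {f : ℝ → ℝ} (hc : Continuous f) {a b : ℝ}
    (h : ∀ y ∈ Ioo a b, ¬ IsLocalExtr f y) : InjOn f (Icc a b) := by
  have key : ∀ x ∈ Icc a b, ∀ y ∈ Icc a b, x < y → f x ≠ f y := by
    intro x hx y hy hxy he
    obtain ⟨z, hz, hz'⟩ := exists_isLocalExtr_Ioo hxy hc.continuousOn he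
    exact h z ⟨hx.1.trans_lt hz.1, hz.2.trans_le hy.2⟩ hz'
  intro x hx y hy he
  rcases lt_trichotomy x y with hlt | heq | hlt
  · exact absurd he (key x hx y hy hlt)
  · exact heq
  · exact absurd he.symm (key y hy x hx hlt)

theorem exists_unimodal {f : ℝ → ℝ} (hf : f ∈ SmoothOneMinOneMax) :
    ∃ a b, Unimodal f a b := by
  obtain ⟨a, ha, hamin, hau⟩ := exists_min hf
  obtain ⟨b₀, hb₀, hbmax₀, hbu₀⟩ := exists_max hf
  have hper : Function.Periodic f 1 := hf.2.1
  have hc : Continuous f := hf.1.continuous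
  have hne : b₀ ≠ a := by
    rintro rfl
    -- otherwise `f` is constant, and every point is a local minimum
    have hmin : ∀ y, IsLocalMin f y := fun y =>
      Eventually.of_forall fun x => (hbmax₀ y).trans (hamin x)
    obtain ⟨n, hn⟩ := hau (b₀ + 1 / 2) (hmin _)
    have h2 : (2 * n : ℝ) = 1 := by linarith
    have h3 : (2 * n : ℤ) = 1 := by exact_mod_cast h2
    omega
  obtain ⟨b, hab, hba, hbmax, hbu⟩ : ∃ b, a < b ∧ b < a + 1 ∧ (∀ x, f x ≤ f b) ∧
      ∀ y, IsLocalMax f y → ∃ n : ℤ, y = b + n := by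
    rcases lt_or_gt_of_ne hne with h | h
    · refine ⟨b₀ + 1, by linarith [hb₀.1, ha.2], by linarith, fun x => ?_, fun y hy => ?_⟩
      · rw [hper b₀]; exact hbmax₀ x
      · obtain ⟨n, hn⟩ := hbu₀ y hy
        exact ⟨n - 1, by push_cast; linarith⟩
    · exact ⟨b₀, h, by linarith [hb₀.2, ha.1], hbmax₀, hbu₀⟩
  have hno : ∀ y, a < y → y < a + 1 → y ≠ b → ¬ IsLocalExtr f y := by
    rintro y hy1 hy2 hyb (h | h)
    · obtain ⟨n, hn⟩ := hau y h
      have h0 : (0 : ℝ) < n := by linarith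
      have h1 : (n : ℝ) < 1 := by linarith
      have h0' : 0 < n := by exact_mod_cast h0
      have h1' : n < 1 := by exact_mod_cast h1
      omega
    · obtain ⟨n, hn⟩ := hbu y h
      have h0 : (-1 : ℝ) < n := by linarith
      have h1 : (n : ℝ) < 1 := by linarith
      have h0' : -1 < n := by exact_mod_cast h0
      have h1' : n < 1 := by exact_mod_cast h1
      obtain rfl : n = 0 := by omega
      exact hyb (by simpa using hn)
  refine ⟨a, b, hab, hba, ?_, ?_⟩
  · exact hc.continuousOn.strictMonoOn_of_injOn_Icc hab.le (hamin b)
      (injOn_of_no_extr hc fun y hy => hno y hy.1 (hy.2.trans hba) hy.2.ne)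
  · exact hc.continuousOn.strictAntiOn_of_injOn_Icc hba.le (hbmax _)
      (injOn_of_no_extr hc fun y hy => hno y (hab.trans hy.1) hy.2 hy.1.ne')

theorem Unimodal.existsUnique_min {f : ℝ → ℝ} {a b : ℝ} (h : Unimodal f a b)
    (hp : ∀ x, f (x + 1) = f x) : ∃! x, x ∈ Ico (0 : ℝ) 1 ∧ IsLocalMin f x := by
  have hper : Function.Periodic f 1 := hp
  have hab := h.lt
  have hba := h.lt'
  have hglob : ∀ x, f a ≤ f x := by
    intro x
    obtain ⟨y, hy, hxy⟩ := hper.exists_mem_Ico one_pos x a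
    rw [hxy]
    rcases le_total y b with hyb | hyb
    · exact h.mono.monotoneOn ⟨le_rfl, hab.le⟩ ⟨hy.1, hyb⟩ hy.1
    · rw [← hp a]
      exact h.anti.antitoneOn ⟨hyb, hy.2.le⟩ ⟨hba.le, le_rfl⟩ hy.2.le
  have huniq : ∀ y ∈ Ico a (a + 1), IsLocalMin f y → y = a := by
    intro y hy hmin
    by_contra hne
    have hay : a < y := lt_of_le_of_ne hy.1 (Ne.symm hne)
    rcases le_or_gt y b with hyb | hyb
    · obtain ⟨z, hz1, hz2⟩ := ((hmin.filter_mono (nhdsWithin_le_nhds (s := Iio y))).and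
        (Ioo_mem_nhdsLT hay)).exists
      exact absurd (h.mono ⟨hz2.1.le, hz2.2.le.trans hyb⟩ ⟨hy.1, hyb⟩ hz2.2) (not_lt.2 hz1)
    · obtain ⟨z, hz1, hz2⟩ := ((hmin.filter_mono (nhdsWithin_le_nhds (s := Ioi y))).and
        (Ioo_mem_nhdsGT hy.2)).exists
      exact absurd (h.anti ⟨hyb.le, hy.2.le⟩ ⟨hyb.le.trans hz2.1.le, hz2.2.le⟩ hz2.1)
        (not_lt.2 hz1)
  refine ⟨Int.fract a, ⟨⟨Int.fract_nonneg a, Int.fract_lt_one a⟩, ?_⟩, ?_⟩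
  · have := isLocalMin_add_int hp (-⌊a⌋) (Eventually.of_forall hglob : IsLocalMin f a)
    simpa [Int.fract, sub_eq_add_neg] using this
  · rintro y ⟨hy, hmin⟩
    have h1 : y + (-⌊y - a⌋ : ℤ) = a := by
      refine huniq _ ?_ (isLocalMin_add_int hp _ hmin)
      push_cast
      constructor
      · linarith [Int.floor_le (y - a)]
      · linarith [Int.lt_floor_add_one (y - a)]
    rw [← h1, Int.fract_add_intCast, Int.fract_eq_self.2 hy]

theorem Unimodal.mem {f : ℝ → ℝ} {a b : ℝ} (h : Unimodal f a b)
    (hs : ContDiff ℝ (⊤ : ℕ∞) f) (hp : ∀ x, f (x + 1) = f x) : f ∈ SmoothOneMinOneMax := by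
  refine ⟨hs, hp, h.existsUnique_min hp, ?_⟩
  have h' : Unimodal (fun x => -f x) b (a + 1) := by
    refine ⟨h.lt', by linarith [h.lt], fun x hx y hy hxy => neg_lt_neg (h.anti hx hy hxy), ?_⟩
    intro x hx y hy hxy
    have hx' : x - 1 ∈ Icc a b := ⟨by linarith [hx.1], by linarith [hx.2]⟩
    have hy' : y - 1 ∈ Icc a b := ⟨by linarith [hy.1], by linarith [hy.2]⟩
    have h1 := h.mono hx' hy' (by linarith)
    rw [← hp (x - 1), ← hp (y - 1), sub_add_cancel, sub_add_cancel] at h1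
    exact neg_lt_neg h1
  obtain ⟨x, ⟨hx, hx'⟩, hu⟩ := h'.existsUnique_min (fun x => by simp [hp])
  exact ⟨x, ⟨hx, by simpa using hx'.neg⟩, fun y hy => hu y ⟨hy.1, hy.2.neg⟩⟩

/-! ### Reparametrization by lifts of circle homeomorphisms -/

/-- `φ` is a smooth, strictly increasing lift to `ℝ` of a degree-one map of the circle `ℝ/ℤ`.
Its inverse is not required to be smooth. -/
structure IsLift (φ : ℝ → ℝ) : Prop where
  smooth : ContDiff ℝ (⊤ : ℕ∞) φ
  mono : StrictMono φ
  add_one : ∀ x, φ (x + 1) = φ x + 1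

theorem IsLift.surjective {φ : ℝ → ℝ} (h : IsLift φ) : Function.Surjective φ := by
  have hint : ∀ n : ℤ, φ n = φ 0 + n := by
    intro n
    have hper : Function.Periodic (fun x => φ x - x) 1 := fun x => by
      simp only [h.add_one]; ring
    have := hper.int_mul n 0
    simp only [mul_one, zero_add, sub_zero] at this
    linarith
  intro y
  set n := ⌊y - φ 0⌋ with hn
  have h1 := Int.floor_le (y - φ 0)
  have h2 := Int.lt_floor_add_one (y - φ 0)
  rw [← hn] at h1 h2
  have := intermediate_value_Icc (a := (n : ℝ)) (b := n + 1) (by linarith)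
    h.smooth.continuous.continuousOn
  rw [h.add_one, hint] at this
  obtain ⟨x, -, hx⟩ := this (show y ∈ _ from ⟨by linarith, by linarith⟩)
  exact ⟨x, hx⟩

theorem Unimodal.comp {f φ : ℝ → ℝ} {a b : ℝ} (h : Unimodal f (φ a) (φ b)) (hφ : IsLift φ) :
    Unimodal (fun x => f (φ x)) a b := by
  refine ⟨hφ.mono.lt_iff_lt.1 h.lt, hφ.mono.lt_iff_lt.1 ?_, ?_, ?_⟩
  · rw [hφ.add_one]; exact h.lt'
  · exact fun x hx y hy hxy => h.mono ⟨hφ.mono.monotone hx.1, hφ.mono.monotone hx.2⟩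
      ⟨hφ.mono.monotone hy.1, hφ.mono.monotone hy.2⟩ (hφ.mono hxy)
  · have hI : ∀ x ∈ Icc b (a + 1), φ x ∈ Icc (φ b) (φ a + 1) := fun x hx =>
      ⟨hφ.mono.monotone hx.1, by rw [← hφ.add_one]; exact hφ.mono.monotone hx.2⟩
    exact fun x hx y hy hxy => h.anti (hI x hx) (hI y hy) (hφ.mono hxy)

theorem comp_mem {f φ : ℝ → ℝ} (hf : f ∈ SmoothOneMinOneMax) (hφ : IsLift φ) :
    (fun x => f (φ x)) ∈ SmoothOneMinOneMax := by
  obtain ⟨a, b, h⟩ := exists_unimodal hf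
  obtain ⟨a', rfl⟩ := hφ.surjective a
  obtain ⟨b', rfl⟩ := hφ.surjective b
  exact (h.comp hφ).mem (hf.1.comp hφ.smooth) fun x => by rw [hφ.add_one, hf.2.1]

theorem IsLift.segment {φ : ℝ → ℝ} (h : IsLift φ) {t : ℝ} (ht : t ∈ Icc (0 : ℝ) 1) :
    IsLift (fun x => (1 - t) * x + t * φ x) := by
  have hs := h.smooth
  refine ⟨by fun_prop, ?_, fun x => by rw [h.add_one]; ring⟩
  intro x y hxy
  have h1 := h.mono hxy
  rcases ht.2.lt_or_eq with hlt | rfl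
  · exact add_lt_add_of_lt_of_le (mul_lt_mul_of_pos_left hxy (by linarith))
      (mul_le_mul_of_nonneg_left h1.le ht.1)
  · simpa using h1

/-- Some lift carries `±1/4` to the prescribed points `a < b < a + 1`. In the angle `θ = 2πx`,
it is, up to translation, the boundary action `θ ↦ θ + 2 arctan (r sin θ / (1 - r cos θ))` of a
Möbius transformation of the unit disc, whose derivative is the Poisson kernel
`(1 - r²) / (1 - 2 r cos θ + r²)`. -/
theorem exists_lift {a b : ℝ} (hab : a < b) (hba : b < a + 1) :
    ∃ φ, IsLift φ ∧ φ (-(1 / 4)) = a ∧ φ (1 / 4) = b := by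
  have hπ := Real.pi_pos
  -- `r` is chosen so that the images of `±1/4` are at distance `b - a`
  set s : ℝ := Real.pi * ((b - a) / 2 - 1 / 4) with hs
  have hs1 : -(Real.pi / 4) < s := by rw [hs]; nlinarith
  have hs2 : s < Real.pi / 4 := by rw [hs]; nlinarith
  set r : ℝ := Real.tan s with hr
  have har : Real.arctan r = s := Real.arctan_tan (by linarith) (by linarith)
  have hr1 : -1 < r := by
    rw [← Real.arctan_strictMono.lt_iff_lt, har, Real.arctan_neg, Real.arctan_one]; exact hs1
  have hr2 : r < 1 := by
    rw [← Real.arctan_strictMono.lt_iff_lt, har, Real.arctan_one]; exact hs2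
  have hden : ∀ θ : ℝ, 0 < 1 - r * Real.cos θ := by
    intro θ
    have : |r * Real.cos θ| < 1 := by
      rw [abs_mul]
      have := abs_lt.2 ⟨hr1, hr2⟩
      nlinarith [Real.abs_cos_le_one θ, abs_nonneg r, abs_nonneg (Real.cos θ)]
    linarith [(abs_lt.1 this).2]
  refine ⟨fun x => (a + b) / 2 + x + 1 / Real.pi * Real.arctan
    (r * Real.sin (2 * Real.pi * x) / (1 - r * Real.cos (2 * Real.pi * x))), ⟨?_, ?_, ?_⟩, ?_, ?_⟩
  · have hquot : ContDiff ℝ (⊤ : ℕ∞)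
        (fun x => r * Real.sin (2 * Real.pi * x) / (1 - r * Real.cos (2 * Real.pi * x))) :=
      ContDiff.div (by fun_prop) (by fun_prop) fun x => (hden _).ne'
    exact (contDiff_const.add contDiff_id).add (contDiff_const.mul (Real.contDiff_arctan.comp hquot))
  · refine strictMono_of_hasDerivAt_pos (f' := fun x =>
      (1 - r ^ 2) / ((1 - r * Real.cos (2 * Real.pi * x)) ^ 2
        + (r * Real.sin (2 * Real.pi * x)) ^ 2)) ?_ ?_
    · intro x
      have hlin : HasDerivAt (fun x : ℝ => 2 * Real.pi * x) (2 * Real.pi) x := by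
        simpa using (hasDerivAt_id x).const_mul (2 * Real.pi)
      have hd := hden (2 * Real.pi * x)
      have hnum := (hlin.sin).const_mul r
      have hde := ((hlin.cos).const_mul r).const_sub 1
      have hA := ((hnum.div hde hd.ne').arctan).const_mul (1 / Real.pi)
      have hB := ((hasDerivAt_id x).const_add ((a + b) / 2)).add hA
      refine hB.congr_deriv ?_
      have hsc := Real.sin_sq_add_cos_sq (2 * Real.pi * x)
      simp only [Pi.div_apply]
      generalize Real.sin (2 * Real.pi * x) = S at *
      generalize Real.cos (2 * Real.pi * x) = C at *
      have hpos : 0 < (1 - r * C) ^ 2 + (r * S) ^ 2 := by positivity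
      have e1 : 1 + (r * S / (1 - r * C)) ^ 2
          = ((1 - r * C) ^ 2 + (r * S) ^ 2) / (1 - r * C) ^ 2 := by
        field_simp
      rw [e1]
      field_simp
      linear_combination (-r^2) * hsc
    · intro x
      have hd := hden (2 * Real.pi * x)
      have : 0 < 1 - r ^ 2 := by nlinarith
      positivity
  · intro x
    have : 2 * Real.pi * (x + 1) = 2 * Real.pi * x + 2 * Real.pi := by ring
    simp only [this, Real.sin_add_two_pi, Real.cos_add_two_pi]
    ring
  · have : 2 * Real.pi * -(1 / 4) = -(Real.pi / 2) := by ring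
    simp only [this, Real.sin_neg, Real.cos_neg, Real.sin_pi_div_two, Real.cos_pi_div_two]
    simp only [mul_neg, mul_one, mul_zero, sub_zero, div_one, Real.arctan_neg, har, hs]
    field_simp
    ring
  · have : 2 * Real.pi * (1 / 4) = Real.pi / 2 := by ring
    simp only [this, Real.sin_pi_div_two, Real.cos_pi_div_two]
    simp only [mul_one, mul_zero, sub_zero, div_one, har, hs]
    field_simp
    ring

/-! ### Paths in the space of continuous functions -/

/-- A jointly continuous family of functions in `SmoothOneMinOneMax` is a path in `C(ℝ, ℝ)`. -/
theorem joinedIn_of_homotopy {f g : C(ℝ, ℝ)} (F : ℝ → ℝ → ℝ)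
    (hF : Continuous fun p : ℝ × ℝ => F p.1 p.2) (h0 : F 0 = f) (h1 : F 1 = g)
    (hmem : ∀ t ∈ Icc (0 : ℝ) 1, F t ∈ SmoothOneMinOneMax) :
    JoinedIn {k : C(ℝ, ℝ) | ⇑k ∈ SmoothOneMinOneMax} f g := by
  let K : C(unitInterval × ℝ, ℝ) := ⟨fun p => F p.1 p.2, by
    exact hF.comp ((continuous_subtype_val.comp continuous_fst).prodMk continuous_snd)⟩
  refine ⟨⟨K.curry, ?_, ?_⟩, fun t => hmem t t.2⟩
  · ext x
    exact congrFun h0 x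
  · ext x
    exact congrFun h1 x

theorem joinedIn_comp {f k : C(ℝ, ℝ)} {φ : ℝ → ℝ} (hf : ⇑f ∈ SmoothOneMinOneMax)
    (hφ : IsLift φ) (hk : ∀ x, k x = f (φ x)) :
    JoinedIn {k : C(ℝ, ℝ) | ⇑k ∈ SmoothOneMinOneMax} f k := by
  have hc := hφ.smooth.continuous
  refine joinedIn_of_homotopy (fun t x => f ((1 - t) * x + t * φ x)) (by fun_prop) ?_ ?_
    fun t ht => comp_mem hf (hφ.segment ht)
  · ext x; simp
  · ext x; simp [hk]

theorem joinedIn_of_unimodal {f g : C(ℝ, ℝ)} {a b : ℝ} (hf : ⇑f ∈ SmoothOneMinOneMax)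
    (hg : ⇑g ∈ SmoothOneMinOneMax) (hfu : Unimodal f a b) (hgu : Unimodal g a b) :
    JoinedIn {k : C(ℝ, ℝ) | ⇑k ∈ SmoothOneMinOneMax} f g := by
  have key : ∀ {t u v u' v' : ℝ}, t ∈ Icc (0 : ℝ) 1 → u < u' → v < v' →
      (1 - t) * u + t * v < (1 - t) * u' + t * v' := by
    intro t u v u' v' ht hu hv
    rcases ht.2.lt_or_eq with hlt | rfl
    · exact add_lt_add_of_lt_of_le (mul_lt_mul_of_pos_left hu (by linarith))
        (mul_le_mul_of_nonneg_left hv.le ht.1)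
    · simpa using hv
  refine joinedIn_of_homotopy (fun t x => (1 - t) * f x + t * g x) (by fun_prop) ?_ ?_ ?_
  · ext x; simp
  · ext x; simp
  · intro t ht
    have hfs := hf.1
    have hgs := hg.1
    refine Unimodal.mem (a := a) (b := b) ⟨hfu.lt, hfu.lt', ?_, ?_⟩ ?_ ?_
    · exact fun x hx y hy hxy => key ht (hfu.mono hx hy hxy) (hgu.mono hx hy hxy)
    · exact fun x hx y hy hxy => key ht (hfu.anti hx hy hxy) (hgu.anti hx hy hxy)
    · exact (contDiff_const.mul hfs).add (contDiff_const.mul hgs)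
    · intro x
      rw [hf.2.1, hg.2.1]

/-- Every function of the class is joined to one whose extremal points are the integer translates
of `±1/4`. -/
theorem exists_joinedIn_normalized {f : C(ℝ, ℝ)} (hf : ⇑f ∈ SmoothOneMinOneMax) :
    ∃ k : C(ℝ, ℝ), JoinedIn {k : C(ℝ, ℝ) | ⇑k ∈ SmoothOneMinOneMax} f k ∧
      Unimodal k (-(1 / 4)) (1 / 4) := by
  obtain ⟨a, b, h⟩ := exists_unimodal hf
  obtain ⟨φ, hφ, rfl, rfl⟩ := exists_lift h.lt h.lt'
  exact ⟨⟨fun x => f (φ x), f.continuous.comp hφ.smooth.continuous⟩,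
    joinedIn_comp hf hφ fun _ => rfl, h.comp hφ⟩

theorem smoothOneMinOneMax_pathConnected
    (f g : ℝ → ℝ) (hf : f ∈ SmoothOneMinOneMax) (hg : g ∈ SmoothOneMinOneMax) :
    ∃ H : ℝ × Set.Icc (0:ℝ) 1 → ℝ, Continuous H ∧
      (∀ x : ℝ, H (x, ⟨0, by norm_num⟩) = f x) ∧
      (∀ x : ℝ, H (x, ⟨1, by norm_num⟩) = g x) ∧
      (∀ t : Set.Icc (0:ℝ) 1, (fun x => H (x, t)) ∈ SmoothOneMinOneMax) := by
  let F : C(ℝ, ℝ) := ⟨f, hf.1.continuous⟩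
  let G : C(ℝ, ℝ) := ⟨g, hg.1.continuous⟩
  obtain ⟨k, hFk, hk⟩ := exists_joinedIn_normalized (f := F) hf
  obtain ⟨l, hGl, hl⟩ := exists_joinedIn_normalized (f := G) hg
  have hJ := (hFk.trans (joinedIn_of_unimodal hFk.target_mem hGl.target_mem hk hl)).trans hGl.symm
  obtain ⟨γ, hγ⟩ := hJ
  refine ⟨fun p => γ p.2 p.1, ?_, fun x => ?_, fun x => ?_, fun t => hγ t⟩
  · exact continuous_eval.comp ((γ.continuous.comp continuous_snd).prodMk continuous_fst)
  · exact congrArg (fun k : C(ℝ, ℝ) => k x) γ.source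
  · exact congrArg (fun k : C(ℝ, ℝ) => k x) γ.target
end
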